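/- For every p with 1 < p < ∞, the von Neumann–Jordan constant of the Schatten class S_p(H) equals max{2^{2/p − 1}, 2^{1 − 2/p}}. -/

import Mathlib

open scoped InnerProductSpace ENNReal Topology
open Filter

/-- An Orlicz function (N-function): convex, nondecreasing and continuous on `[0, ∞)`,
vanishing at `0`, positive on `(0, ∞)` and tending to `∞` at `∞`. -/
structure OrliczFunction : Type where
  toFun : ℝ → ℝ
  convexOn : ConvexOn ℝ (Set.Ici (0 : ℝ)) toFun
  monotoneOn : MonotoneOn toFun (Set.Ici (0 : ℝ))
  continuousOn : ContinuousOn toFun (Set.Ici (0 : ℝ))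
  map_zero : toFun 0 = 0
  pos : ∀ x : ℝ, 0 < x → 0 < toFun x
  tendsto_atTop : Filter.Tendsto toFun Filter.atTop Filter.atTop

/-- `ψ` is the complementary N-function of `φ`: `ψ(y) = sup {x·y − φ(x) : x ≥ 0}`. -/
def OrliczFunction.IsComplementary (φ ψ : OrliczFunction) : Prop :=
  ∀ y : ℝ, 0 ≤ y → ψ.toFun y = sSup {v : ℝ | ∃ x : ℝ, 0 ≤ x ∧ v = x * y - φ.toFun x}

/-- `g` is the (two-sided) inverse of `f` on `[0, ∞)`, taking nonnegative values. -/
def IsOrliczInverse (g f : ℝ → ℝ) : Prop :=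
  (∀ u : ℝ, 0 ≤ u → 0 ≤ g u) ∧ (∀ u : ℝ, 0 ≤ u → f (g u) = u) ∧
    ∀ u : ℝ, 0 ≤ u → g (f u) = u

variable {H : Type} [NormedAddCommGroup H] [InnerProductSpace ℂ H] [CompleteSpace H]

/-- The `n`-th singular value of an operator `T` (indexed from `n = 0`), described as the
`n`-th approximation number: the distance from `T` to the operators of rank `≤ n`.  For a
compact operator on a Hilbert space this is exactly the `(n+1)`-st eigenvalue of
`|T| = (T*T)^(1/2)` in decreasing order. -/
noncomputable def sValue (T : H →L[ℂ] H) (n : ℕ) : ℝ :=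
  sInf {c : ℝ | ∃ F : H →L[ℂ] H,
    Module.rank ℂ (LinearMap.range F.toLinearMap) ≤ (n : Cardinal) ∧ c = ‖T - F‖}

/-- `tr(φ(|T|)) = Σ_n φ(s_n(T))`. -/
noncomputable def orliczSum (φ : OrliczFunction) (T : H →L[ℂ] H) : ℝ :=
  ∑' n : ℕ, φ.toFun (sValue T n)

/-- Membership in the noncommutative Orlicz sequence space `S_φ(H)`:
`T` is compact and `Σ_n φ(λ s_n(T)) < ∞` for some `λ > 0`. -/
def MemS (φ : OrliczFunction) (T : H →L[ℂ] H) : Prop :=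
  IsCompactOperator (⇑T) ∧
    ∃ l : ℝ, 0 < l ∧ Summable fun n : ℕ => φ.toFun (l * sValue T n)

/-- The Luxemburg norm `‖T‖_(φ) = inf {λ > 0 : Σ_n φ(s_n(T)/λ) ≤ 1}`. -/
noncomputable def luxNorm (φ : OrliczFunction) (T : H →L[ℂ] H) : ℝ :=
  sInf {l : ℝ | 0 < l ∧ (Summable fun n : ℕ => φ.toFun (sValue T n / l)) ∧
    ∑' n : ℕ, φ.toFun (sValue T n / l) ≤ 1}

/-- The Orlicz norm `‖T‖_φ = sup {tr |TB| : tr(ψ(B)) ≤ 1}`, expressed through the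
complementary function `ψ` of `φ` (here `tr|TB| = Σ_n s_n(TB)`). -/
noncomputable def orlNormVia (ψ : OrliczFunction) (T : H →L[ℂ] H) : ℝ :=
  sSup {c : ℝ | ∃ B : H →L[ℂ] H, IsCompactOperator (⇑B) ∧
    (Summable fun n : ℕ => ψ.toFun (sValue B n)) ∧
    (∑' n : ℕ, ψ.toFun (sValue B n)) ≤ 1 ∧ c = ∑' n : ℕ, sValue (T ∘L B) n}

/-- The norm `‖T‖_((φ),p) = (‖T₁‖_(φ₁)^p + ‖T₂‖_(φ₂)^p)^(1/p)` on 2-tuples. -/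
noncomputable def luxNorm2 (φ₁ φ₂ : OrliczFunction) (p : ℝ) (T₁ T₂ : H →L[ℂ] H) : ℝ :=
  (luxNorm φ₁ T₁ ^ p + luxNorm φ₂ T₂ ^ p) ^ (1 / p)

/-- The Orlicz-type norm `‖T‖_(φ,p) = (‖T₁‖_φ₁^p + ‖T₂‖_φ₂^p)^(1/p)` on 2-tuples,
where the Orlicz norms are computed via the complementary functions `ψ₁, ψ₂`. -/
noncomputable def orlNorm2 (ψ₁ ψ₂ : OrliczFunction) (p : ℝ) (T₁ T₂ : H →L[ℂ] H) : ℝ :=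
  (orlNormVia ψ₁ T₁ ^ p + orlNormVia ψ₂ T₂ ^ p) ^ (1 / p)

/-- 2-tuple Luxemburg norm for an exponent `r ∈ [1, ∞]`. -/
noncomputable def luxNorm2E (φ₁ φ₂ : OrliczFunction) (r : ℝ≥0∞) (T₁ T₂ : H →L[ℂ] H) : ℝ :=
  if r = ⊤ then max (luxNorm φ₁ T₁) (luxNorm φ₂ T₂)
  else (luxNorm φ₁ T₁ ^ r.toReal + luxNorm φ₂ T₂ ^ r.toReal) ^ (1 / r.toReal)

/-- The trace of an operator, computed along a Hilbert basis. -/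
noncomputable def traceAlong {ι : Type} (b : HilbertBasis ι ℂ H) (T : H →L[ℂ] H) : ℂ :=
  ∑' i : ι, ⟪b i, T (b i)⟫_ℂ

/-- The Schatten `p`-norm `‖T‖_p = (Σ_n s_n(T)^p)^(1/p)`. -/
noncomputable def schattenNorm (p : ℝ) (T : H →L[ℂ] H) : ℝ :=
  (∑' n : ℕ, sValue T n ^ p) ^ (1 / p)

/-- Membership in the Schatten class `S_p(H)`. -/
def MemSp (p : ℝ) (T : H →L[ℂ] H) : Prop :=
  IsCompactOperator (⇑T) ∧ Summable fun n : ℕ => sValue T n ^ p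

/-- The nonsquare constant `J` of the noncommutative Orlicz space `S_φ(H)`
(with the Luxemburg norm). -/
noncomputable def JOrlicz (φ : OrliczFunction) : ℝ :=
  sSup {c : ℝ | ∃ T B : H →L[ℂ] H, MemS φ T ∧ MemS φ B ∧
    luxNorm φ T = 1 ∧ luxNorm φ B = 1 ∧
    c = min (luxNorm φ (T + B)) (luxNorm φ (T - B))}

/-- The von Neumann–Jordan constant of `S_φ(H)` (with the Luxemburg norm): the smallest
`c > 0` such that `1/c ≤ (‖x+y‖² + ‖x−y‖²)/(2(‖x‖² + ‖y‖²)) ≤ c` for all `x, y` in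
`S_φ(H)` not both zero. -/
noncomputable def cNJOrlicz (φ : OrliczFunction) : ℝ :=
  sInf {c : ℝ | 0 < c ∧ ∀ T B : H →L[ℂ] H, MemS φ T → MemS φ B → ¬(T = 0 ∧ B = 0) →
    1 / c ≤ (luxNorm φ (T + B) ^ 2 + luxNorm φ (T - B) ^ 2) /
        (2 * (luxNorm φ T ^ 2 + luxNorm φ B ^ 2)) ∧
      (luxNorm φ (T + B) ^ 2 + luxNorm φ (T - B) ^ 2) /
        (2 * (luxNorm φ T ^ 2 + luxNorm φ B ^ 2)) ≤ c}

/-- The von Neumann–Jordan constant of the Schatten class `S_p(H)`. -/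
noncomputable def cNJSchatten (p : ℝ) : ℝ :=
  sInf {c : ℝ | 0 < c ∧ ∀ T B : H →L[ℂ] H, MemSp p T → MemSp p B → ¬(T = 0 ∧ B = 0) →
    1 / c ≤ (schattenNorm p (T + B) ^ 2 + schattenNorm p (T - B) ^ 2) /
        (2 * (schattenNorm p T ^ 2 + schattenNorm p B ^ 2)) ∧
      (schattenNorm p (T + B) ^ 2 + schattenNorm p (T - B) ^ 2) /
        (2 * (schattenNorm p T ^ 2 + schattenNorm p B ^ 2)) ≤ c}

section OrthogonalImages

variable {E F : Type} [NormedAddCommGroup E] [InnerProductSpace ℂ E]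
  [NormedAddCommGroup F] [InnerProductSpace ℂ F] {ι κ : Type}

/-- The Hilbert basis `a` is mapped by `T` to a family of pairwise orthogonal vectors, that is,
`a` consists of right singular vectors of `T`. -/
def IsSingularBasis (a : HilbertBasis ι ℂ E) (T : E →L[ℂ] F) : Prop :=
  Pairwise fun i j => ⟪T (a i), T (a j)⟫_ℂ = 0

theorem norm_sum_sq_of_pairwise_inner_eq_zero {v : ι → F}
    (hv : Pairwise fun i j => ⟪v i, v j⟫_ℂ = 0) (s : Finset ι) :
    ‖∑ i ∈ s, v i‖ ^ 2 = ∑ i ∈ s, ‖v i‖ ^ 2 := by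
  classical
  induction s using Finset.induction_on with
  | empty => simp
  | insert i s hi ih =>
    rw [Finset.sum_insert hi, Finset.sum_insert hi, ← ih, sq, sq, sq]
    apply norm_add_sq_eq_norm_sq_add_norm_sq_of_inner_eq_zero (𝕜 := ℂ)
    rw [inner_sum]
    exact Finset.sum_eq_zero fun j hj => hv (by rintro rfl; exact hi hj)

theorem IsSingularBasis.norm_map_sum_sq {a : HilbertBasis ι ℂ E} {T : E →L[ℂ] F}
    (h : IsSingularBasis a T) (s : Finset ι) (c : ι → ℂ) :
    ‖T (∑ i ∈ s, c i • a i)‖ ^ 2 = ∑ i ∈ s, ‖c i‖ ^ 2 * ‖T (a i)‖ ^ 2 := by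
  have hv : Pairwise fun i j => ⟪c i • T (a i), c j • T (a j)⟫_ℂ = 0 := fun i j hij => by
    change inner ℂ _ _ = 0
    rw [inner_smul_left, inner_smul_right, h hij, mul_zero, mul_zero]
  simp only [map_sum, map_smul]
  rw [norm_sum_sq_of_pairwise_inner_eq_zero hv]
  simp [norm_smul, mul_pow]

theorem IsSingularBasis.hasSum_norm_sq {a : HilbertBasis ι ℂ E} {T : E →L[ℂ] F}
    (h : IsSingularBasis a T) (x : E) :
    HasSum (fun i => ‖⟪a i, x⟫_ℂ‖ ^ 2 * ‖T (a i)‖ ^ 2) (‖T x‖ ^ 2) := by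
  have hx := a.hasSum_repr x
  have hlim : Tendsto (fun s : Finset ι => ‖T (∑ i ∈ s, a.repr x i • a i)‖ ^ 2) atTop
      (𝓝 (‖T x‖ ^ 2)) :=
    ((((by fun_prop : Continuous fun y => ‖T y‖ ^ 2).tendsto x)).comp hx)
  simp only [h.norm_map_sum_sq, a.repr_apply_apply] at hlim
  exact hlim

theorem HilbertBasis.isSingularBasis_id (a : HilbertBasis ι ℂ E) :
    IsSingularBasis a (ContinuousLinearMap.id ℂ E) :=
  fun _ _ hij => a.orthonormal.2 hij

theorem HilbertBasis.hasSum_norm_inner_sq (a : HilbertBasis ι ℂ E) (x : E) :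
    HasSum (fun i => ‖⟪a i, x⟫_ℂ‖ ^ 2) (‖x‖ ^ 2) := by
  simpa [a.orthonormal.1] using a.isSingularBasis_id.hasSum_norm_sq x

/-- A compact self-adjoint operator has a Hilbert basis of eigenvectors. -/
theorem exists_hilbertBasis_eigenvectors [CompleteSpace E] {Z : E →L[ℂ] E}
    (hZ : IsCompactOperator Z) (hZ' : Z.IsSymmetric) :
    ∃ (ι : Type) (a : HilbertBasis ι ℂ E) (μ : ι → ℂ), ∀ i, Z (a i) = μ i • a i := by
  have hbasis : ∀ μ : ℂ, ∃ (w : Set (Module.End.eigenspace Z.toLinearMap μ))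
      (b : HilbertBasis w ℂ (Module.End.eigenspace Z.toLinearMap μ)), ⇑b = ((↑) : w → _) :=
    fun μ => by
      have : CompleteSpace (Module.End.eigenspace Z.toLinearMap μ) :=
        (Z.isClosed_eigenspace μ).completeSpace_coe
      exact exists_hilbertBasis ℂ _
  choose w b hb using hbasis
  have hon := hZ'.orthogonalFamily_eigenspaces.orthonormal_sigma_orthonormal
    (fun μ => (b μ).orthonormal)
  refine ⟨_, HilbertBasis.mkOfOrthogonalEqBot hon ?_, fun i => i.1, fun i => ?_⟩
  · rw [Submodule.eq_bot_iff]
    intro x hx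
    have hmem : x ∈ (⨆ μ, Module.End.eigenspace (Z : Module.End ℂ E) μ)ᗮ := by
      rw [← Submodule.iInf_orthogonal, Submodule.mem_iInf]
      intro μ
      rw [Submodule.mem_orthogonal]
      intro y hy
      have hsum := ((Module.End.eigenspace Z.toLinearMap μ).subtypeL).hasSum
        ((b μ).hasSum_repr ⟨y, hy⟩)
      have hsum' := (innerSL ℂ x).hasSum hsum
      have hzero : ∀ i, (innerSL ℂ x) ((Module.End.eigenspace Z.toLinearMap μ).subtypeL
          ((b μ).repr ⟨y, hy⟩ i • b μ i)) = 0 := by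
        intro i
        have := (Submodule.mem_orthogonal _ _).1 hx _ (Submodule.subset_span ⟨⟨μ, i⟩, rfl⟩)
        rw [map_smul, map_smul]
        simp only [innerSL_apply_apply]
        rw [inner_eq_zero_symm] at this
        exact mul_eq_zero_of_right _ this
      have := hsum'.unique (((funext hzero).symm ▸ hasSum_zero))
      rw [inner_eq_zero_symm]
      simpa using this
    rwa [ContinuousLinearMap.orthogonalComplement_iSup_eigenspaces_eq_bot hZ hZ'] at hmem
  · rw [HilbertBasis.coe_mkOfOrthogonalEqBot]
    exact Module.End.mem_eigenspace_iff.1 (b i.1 i.2).2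

theorem exists_isSingularBasis [CompleteSpace E] {Z : E →L[ℂ] E} {T : E →L[ℂ] F}
    (hZ : IsCompactOperator Z) (hT : ∀ x y, ⟪T x, T y⟫_ℂ = ⟪Z x, y⟫_ℂ) :
    ∃ (ι : Type) (a : HilbertBasis ι ℂ E), IsSingularBasis a T := by
  have hZ' : Z.IsSymmetric := fun x y => by
    change ⟪Z x, y⟫_ℂ = ⟪x, Z y⟫_ℂ
    rw [← hT, ← inner_conj_symm x, ← hT, inner_conj_symm]
  obtain ⟨ι, a, μ, h⟩ := exists_hilbertBasis_eigenvectors hZ hZ'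
  exact ⟨ι, a, fun i j hij => by
    change ⟪T (a i), T (a j)⟫_ℂ = 0
    rw [hT, h, inner_smul_left, a.orthonormal.2 hij, mul_zero]⟩

/-- If `‖T x‖ ≤ ‖W x‖`, the squared coefficients of `T (a i)` with respect to the singular
vectors of `W` form a substochastic row. -/
theorem IsSingularBasis.sum_coeff_le_one {a : HilbertBasis ι ℂ E} {c : HilbertBasis κ ℂ E}
    {F' : Type} [NormedAddCommGroup F'] [InnerProductSpace ℂ F']
    {T : E →L[ℂ] F} {W : E →L[ℂ] F'} (ha : IsSingularBasis a T) (hc : IsSingularBasis c W)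
    (hTW : ∀ x, ‖T x‖ ≤ ‖W x‖) (i : ι) (s : Finset κ) :
    ∑ k ∈ s, ‖⟪a i, c k⟫_ℂ‖ ^ 2 * ‖T (a i)‖ ^ 2 / ‖W (c k)‖ ^ 2 ≤ 1 := by
  set S : ℝ := ∑ k ∈ s, ‖⟪a i, c k⟫_ℂ‖ ^ 2 / ‖W (c k)‖ ^ 2 with hS
  set y : E := ∑ k ∈ s, (⟪c k, a i⟫_ℂ / (‖W (c k)‖ ^ 2 : ℝ)) • c k with hy
  have hS0 : 0 ≤ S := Finset.sum_nonneg fun _ _ => by positivity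
  have hWy : ‖W y‖ ^ 2 = S := by
    rw [hy, hc.norm_map_sum_sq]
    refine Finset.sum_congr rfl fun k _ => ?_
    rw [norm_div, norm_inner_symm, Complex.norm_real, Real.norm_of_nonneg (by positivity)]
    rcases eq_or_ne (‖W (c k)‖) 0 with h0 | h0
    · simp [h0]
    · field_simp
  have hinner : ⟪a i, y⟫_ℂ = (S : ℂ) := by
    rw [hy, inner_sum, hS, Complex.ofReal_sum]
    refine Finset.sum_congr rfl fun k _ => ?_
    rw [inner_smul_right, div_mul_eq_mul_div, ← inner_conj_symm, Complex.conj_mul']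
    push_cast
    rfl
  have hle : S ^ 2 * ‖T (a i)‖ ^ 2 ≤ S := by
    have h1 := le_hasSum (ha.hasSum_norm_sq y) i fun _ _ => by positivity
    rw [hinner, Complex.norm_real, Real.norm_of_nonneg hS0] at h1
    have h2 : ‖T y‖ ^ 2 ≤ ‖W y‖ ^ 2 := by gcongr; exact hTW y
    linarith
  have hgoal : ∑ k ∈ s, ‖⟪a i, c k⟫_ℂ‖ ^ 2 * ‖T (a i)‖ ^ 2 / ‖W (c k)‖ ^ 2
      = S * ‖T (a i)‖ ^ 2 := by
    rw [hS, Finset.sum_mul]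
    exact Finset.sum_congr rfl fun k _ => by ring
  rw [hgoal]
  rcases hS0.eq_or_lt with h0 | h0
  · rw [← h0]; simp
  · nlinarith

end OrthogonalImages

section ENNRealSums

variable {ι κ : Type}

theorem ENNReal.tsum_mul_le_rpow_tsum_mul_rpow {r : ℝ} (hr : 1 ≤ r) {w : ι → ℝ≥0∞}
    (hw : ∑' i, w i ≤ 1) (f : ι → ℝ≥0∞) :
    ∑' i, w i * f i ≤ (∑' i, w i * f i ^ r) ^ r⁻¹ := by
  rw [ENNReal.tsum_eq_iSup_sum]
  refine iSup_le fun s => (ENNReal.inner_le_weight_mul_Lp_of_nonneg s hr w f).trans ?_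
  have hr' : r⁻¹ ≤ 1 := inv_le_one_of_one_le₀ hr
  calc _ ≤ (1 : ℝ≥0∞) ^ (1 - r⁻¹) * (∑' i, w i * f i ^ r) ^ r⁻¹ := by
        gcongr
        · exact (ENNReal.sum_le_tsum s).trans hw
        · exact ENNReal.sum_le_tsum s
    _ = _ := by simp

theorem ENNReal.rpow_tsum_mul_le {r : ℝ} (hr : 1 ≤ r) {w : ι → ℝ≥0∞}
    (hw : ∑' i, w i ≤ 1) (f : ι → ℝ≥0∞) :
    (∑' i, w i * f i) ^ r ≤ ∑' i, w i * f i ^ r := by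
  rw [← ENNReal.le_rpow_inv_iff (by positivity)]
  exact ENNReal.tsum_mul_le_rpow_tsum_mul_rpow hr hw f

theorem ENNReal.le_rpow_tsum_mul {r : ℝ} (hr0 : 0 < r) (hr : r ≤ 1) {w : ι → ℝ≥0∞}
    (hw : ∑' i, w i ≤ 1) (f : ι → ℝ≥0∞) :
    ∑' i, w i * f i ^ r ≤ (∑' i, w i * f i) ^ r := by
  have h := ENNReal.tsum_mul_le_rpow_tsum_mul_rpow (one_le_inv₀ hr0 |>.2 hr) hw fun i => f i ^ r
  simpa [ENNReal.rpow_rpow_inv hr0.ne'] using h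

theorem ENNReal.tsum_rpow_le_of_substochastic {r : ℝ} (hr : 1 ≤ r) {m : ι → κ → ℝ≥0∞}
    {x : ι → ℝ≥0∞} {y c : κ → ℝ≥0∞} (hrow : ∀ i, ∑' k, m i k ≤ 1)
    (hx : ∀ i, ∑' k, m i k * y k = x i) (hcol : ∀ k, ∑' i, m i k = c k) :
    ∑' i, x i ^ r ≤ ∑' k, c k * y k ^ r := by
  calc ∑' i, x i ^ r ≤ ∑' i, ∑' k, m i k * y k ^ r :=
        ENNReal.tsum_le_tsum fun i => by
          rw [← hx]
          exact ENNReal.rpow_tsum_mul_le hr (hrow i) y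
    _ = ∑' k, c k * y k ^ r := by
        rw [ENNReal.tsum_comm]
        simp only [ENNReal.tsum_mul_right, hcol]

theorem ENNReal.le_tsum_rpow_of_substochastic {r : ℝ} (hr0 : 0 < r) (hr : r ≤ 1)
    {m : ι → κ → ℝ≥0∞} {x : ι → ℝ≥0∞} {y c : κ → ℝ≥0∞} (hrow : ∀ i, ∑' k, m i k ≤ 1)
    (hx : ∀ i, ∑' k, m i k * y k = x i) (hcol : ∀ k, ∑' i, m i k = c k) :
    ∑' k, c k * y k ^ r ≤ ∑' i, x i ^ r := by
  calc ∑' k, c k * y k ^ r = ∑' i, ∑' k, m i k * y k ^ r := by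
        rw [ENNReal.tsum_comm]
        simp only [ENNReal.tsum_mul_right, hcol]
    _ ≤ ∑' i, x i ^ r :=
        ENNReal.tsum_le_tsum fun i => by
          rw [← hx]
          exact ENNReal.le_rpow_tsum_mul hr0 hr (hrow i) y

/-- **Minkowski inequality** for infinite sums in `ℝ≥0∞`. -/
theorem ENNReal.rpow_tsum_add_rpow_le {r : ℝ} (hr : 1 ≤ r) (f g : ι → ℝ≥0∞) :
    (∑' i, (f i + g i) ^ r) ^ r⁻¹ ≤ (∑' i, f i ^ r) ^ r⁻¹ + (∑' i, g i ^ r) ^ r⁻¹ := by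
  have hr0 : 0 < r := by positivity
  rw [← ENNReal.le_rpow_inv_iff (by positivity), inv_inv, ENNReal.tsum_eq_iSup_sum]
  refine iSup_le fun s => ?_
  have h := ENNReal.Lp_add_le (s := s) (f := f) (g := g) hr
  rw [one_div, ← ENNReal.le_rpow_inv_iff (by positivity), inv_inv] at h
  refine h.trans ?_
  gcongr <;> exact ENNReal.sum_le_tsum s

/-- **Reverse Minkowski inequality** for infinite sums in `ℝ≥0∞` and exponents at most one. -/
theorem ENNReal.le_rpow_tsum_add_rpow {r : ℝ} (hr0 : 0 < r) (hr : r ≤ 1) (f g : ι → ℝ≥0∞) :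
    (∑' i, f i ^ r) ^ r⁻¹ + (∑' i, g i ^ r) ^ r⁻¹ ≤ (∑' i, (f i + g i) ^ r) ^ r⁻¹ := by
  classical
  have hs : 1 ≤ r⁻¹ := one_le_inv₀ hr0 |>.2 hr
  have htwo : ∀ a b c d : ℝ≥0∞, ((a + c) ^ r⁻¹ + (b + d) ^ r⁻¹) ^ r ≤
      (a ^ r⁻¹ + b ^ r⁻¹) ^ r + (c ^ r⁻¹ + d ^ r⁻¹) ^ r := fun a b c d => by
    simpa using ENNReal.Lp_add_le (s := Finset.univ) (f := ![a, b]) (g := ![c, d]) hs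
  have hfin : ∀ s : Finset ι, ((∑ i ∈ s, f i ^ r) ^ r⁻¹ + (∑ i ∈ s, g i ^ r) ^ r⁻¹) ^ r ≤
      ∑ i ∈ s, (f i + g i) ^ r := fun s => by
    induction s using Finset.induction_on with
    | empty => simp [hr0]
    | insert i s hi ih =>
      simp only [Finset.sum_insert hi]
      refine (htwo _ _ _ _).trans ?_
      rw [ENNReal.rpow_rpow_inv hr0.ne', ENNReal.rpow_rpow_inv hr0.ne']
      gcongr
  have hlim : Tendsto (fun s : Finset ι => (∑ i ∈ s, f i ^ r) ^ r⁻¹ + (∑ i ∈ s, g i ^ r) ^ r⁻¹)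
      atTop (𝓝 ((∑' i, f i ^ r) ^ r⁻¹ + (∑' i, g i ^ r) ^ r⁻¹)) :=
    ((ENNReal.continuous_rpow_const.tendsto _).comp ENNReal.summable.hasSum).add
      ((ENNReal.continuous_rpow_const.tendsto _).comp ENNReal.summable.hasSum)
  refine le_of_tendsto' hlim fun s => ?_
  rw [ENNReal.le_rpow_inv_iff hr0]
  exact (hfin s).trans (ENNReal.sum_le_tsum s)

theorem HasSum.tsum_ofReal {f : ι → ℝ} {a : ℝ} (hf : ∀ i, 0 ≤ f i) (h : HasSum f a) :
    ∑' i, ENNReal.ofReal (f i) = ENNReal.ofReal a := by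
  rw [← ENNReal.ofReal_tsum_of_nonneg hf h.summable, h.tsum_eq]

end ENNRealSums

section SingularBasisSums

variable {E F F' : Type} [NormedAddCommGroup E] [InnerProductSpace ℂ E]
  [NormedAddCommGroup F] [InnerProductSpace ℂ F]
  [NormedAddCommGroup F'] [InnerProductSpace ℂ F'] {ι κ : Type}

theorem HilbertBasis.tsum_ofReal_norm_inner_sq (a : HilbertBasis ι ℂ E) (x : E) :
    ∑' i, ENNReal.ofReal (‖⟪a i, x⟫_ℂ‖ ^ 2) = ENNReal.ofReal (‖x‖ ^ 2) :=
  (a.hasSum_norm_inner_sq x).tsum_ofReal fun _ => by positivity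

theorem IsSingularBasis.tsum_ofReal_mul {a : HilbertBasis ι ℂ E} {T : E →L[ℂ] F}
    (h : IsSingularBasis a T) (x : E) :
    ∑' i, ENNReal.ofReal (‖⟪a i, x⟫_ℂ‖ ^ 2) * ENNReal.ofReal (‖T (a i)‖ ^ 2) =
      ENNReal.ofReal (‖T x‖ ^ 2) := by
  simp_rw [← ENNReal.ofReal_mul (sq_nonneg _)]
  exact (h.hasSum_norm_sq x).tsum_ofReal fun _ => by positivity

theorem HilbertBasis.tsum_ofReal_norm_inner_sq_basis (a : HilbertBasis ι ℂ E)
    (f : HilbertBasis κ ℂ E) (k : κ) : ∑' i, ENNReal.ofReal (‖⟪f k, a i⟫_ℂ‖ ^ 2) = 1 := by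
  simp_rw [norm_inner_symm (f k)]
  rw [a.tsum_ofReal_norm_inner_sq, f.orthonormal.1]
  simp

theorem IsSingularBasis.tsum_rpow_basis_le {r : ℝ} (hr : 1 ≤ r) {a : HilbertBasis ι ℂ E}
    {T : E →L[ℂ] F} (h : IsSingularBasis a T) (f : HilbertBasis κ ℂ E) :
    ∑' j, ENNReal.ofReal (‖T (f j)‖ ^ 2) ^ r ≤ ∑' i, ENNReal.ofReal (‖T (a i)‖ ^ 2) ^ r := by
  simpa using ENNReal.tsum_rpow_le_of_substochastic hr (c := fun _ => 1)
    (fun j => by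
      simp_rw [norm_inner_symm (a _)]
      exact (a.tsum_ofReal_norm_inner_sq_basis f j).le)
    (fun j => h.tsum_ofReal_mul (f j)) fun i => f.tsum_ofReal_norm_inner_sq_basis a i

theorem IsSingularBasis.le_tsum_rpow_basis {r : ℝ} (hr0 : 0 < r) (hr : r ≤ 1)
    {a : HilbertBasis ι ℂ E} {T : E →L[ℂ] F} (h : IsSingularBasis a T) (f : HilbertBasis κ ℂ E) :
    ∑' i, ENNReal.ofReal (‖T (a i)‖ ^ 2) ^ r ≤ ∑' j, ENNReal.ofReal (‖T (f j)‖ ^ 2) ^ r := by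
  simpa using ENNReal.le_tsum_rpow_of_substochastic hr0 hr (c := fun _ => 1)
    (fun j => by
      simp_rw [norm_inner_symm (a _)]
      exact (a.tsum_ofReal_norm_inner_sq_basis f j).le)
    (fun j => h.tsum_ofReal_mul (f j)) fun i => f.tsum_ofReal_norm_inner_sq_basis a i

variable {a : HilbertBasis ι ℂ E} {c : HilbertBasis κ ℂ E} {T : E →L[ℂ] F} {W : E →L[ℂ] F'}

theorem IsSingularBasis.tsum_coeff_le_one (ha : IsSingularBasis a T) (hc : IsSingularBasis c W)
    (hTW : ∀ x, ‖T x‖ ≤ ‖W x‖) (i : ι) :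
    ∑' k, ENNReal.ofReal (‖⟪a i, c k⟫_ℂ‖ ^ 2 * ‖T (a i)‖ ^ 2 / ‖W (c k)‖ ^ 2) ≤ 1 := by
  rw [ENNReal.tsum_eq_iSup_sum]
  refine iSup_le fun s => ?_
  rw [← ENNReal.ofReal_sum_of_nonneg fun _ _ => by positivity]
  exact ENNReal.ofReal_le_one.2 (ha.sum_coeff_le_one hc hTW i s)

theorem IsSingularBasis.tsum_coeff_mul (ha : IsSingularBasis a T)
    (hTW : ∀ x, ‖T x‖ ≤ ‖W x‖) (i : ι) :
    ∑' k, ENNReal.ofReal (‖⟪a i, c k⟫_ℂ‖ ^ 2 * ‖T (a i)‖ ^ 2 / ‖W (c k)‖ ^ 2) *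
      ENNReal.ofReal (‖W (c k)‖ ^ 2) = ENNReal.ofReal (‖T (a i)‖ ^ 2) := by
  have hterm : ∀ k, ENNReal.ofReal (‖⟪a i, c k⟫_ℂ‖ ^ 2 * ‖T (a i)‖ ^ 2 / ‖W (c k)‖ ^ 2) *
      ENNReal.ofReal (‖W (c k)‖ ^ 2) =
      ENNReal.ofReal (‖⟪a i, c k⟫_ℂ‖ ^ 2) * ENNReal.ofReal (‖T (a i)‖ ^ 2) := fun k => by
    rw [← ENNReal.ofReal_mul (by positivity), ← ENNReal.ofReal_mul (by positivity)]
    congr 1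
    rcases eq_or_ne ‖W (c k)‖ 0 with h0 | h0
    · have hT0 : ‖T (c k)‖ = 0 := le_antisymm (h0 ▸ hTW (c k)) (norm_nonneg _)
      have h1 := le_hasSum (ha.hasSum_norm_sq (c k)) i fun _ _ => by positivity
      rw [hT0] at h1
      have h2 : 0 ≤ ‖⟪a i, c k⟫_ℂ‖ ^ 2 * ‖T (a i)‖ ^ 2 := by positivity
      rw [h0]
      linarith
    · field_simp
  simp_rw [hterm]
  rw [ENNReal.tsum_mul_right, c.tsum_ofReal_norm_inner_sq_basis a i, one_mul]

theorem IsSingularBasis.tsum_coeff_column (ha : IsSingularBasis a T) (k : κ) :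
    ∑' i, ENNReal.ofReal (‖⟪a i, c k⟫_ℂ‖ ^ 2 * ‖T (a i)‖ ^ 2 / ‖W (c k)‖ ^ 2) =
      ENNReal.ofReal (‖T (c k)‖ ^ 2 / ‖W (c k)‖ ^ 2) :=
  ((ha.hasSum_norm_sq (c k)).div_const _).tsum_ofReal fun _ => by positivity

theorem IsSingularBasis.tsum_rpow_le_of_norm_le {r : ℝ} (hr : 1 ≤ r)
    (ha : IsSingularBasis a T) (hc : IsSingularBasis c W) (hTW : ∀ x, ‖T x‖ ≤ ‖W x‖) :
    ∑' i, ENNReal.ofReal (‖T (a i)‖ ^ 2) ^ r ≤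
      ∑' k, ENNReal.ofReal (‖T (c k)‖ ^ 2 / ‖W (c k)‖ ^ 2) * ENNReal.ofReal (‖W (c k)‖ ^ 2) ^ r :=
  ENNReal.tsum_rpow_le_of_substochastic hr (ha.tsum_coeff_le_one hc hTW)
    (ha.tsum_coeff_mul hTW) ha.tsum_coeff_column

theorem IsSingularBasis.le_tsum_rpow_of_norm_le {r : ℝ} (hr0 : 0 < r) (hr : r ≤ 1)
    (ha : IsSingularBasis a T) (hc : IsSingularBasis c W) (hTW : ∀ x, ‖T x‖ ≤ ‖W x‖) :
    ∑' k, ENNReal.ofReal (‖T (c k)‖ ^ 2 / ‖W (c k)‖ ^ 2) * ENNReal.ofReal (‖W (c k)‖ ^ 2) ^ r ≤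
      ∑' i, ENNReal.ofReal (‖T (a i)‖ ^ 2) ^ r :=
  ENNReal.le_tsum_rpow_of_substochastic hr0 hr (ha.tsum_coeff_le_one hc hTW)
    (ha.tsum_coeff_mul hTW) ha.tsum_coeff_column

end SingularBasisSums

section SingularValues

variable {E : Type} [NormedAddCommGroup E] [InnerProductSpace ℂ E] {ι κ : Type}

theorem bddBelow_sValue_set (T : E →L[ℂ] E) (n : ℕ) :
    BddBelow {c : ℝ | ∃ F : E →L[ℂ] E,
      Module.rank ℂ (LinearMap.range F.toLinearMap) ≤ (n : Cardinal) ∧ c = ‖T - F‖} :=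
  ⟨0, by rintro _ ⟨F, -, rfl⟩; positivity⟩

theorem sValue_le {T F : E →L[ℂ] E} {n : ℕ}
    (hF : Module.rank ℂ (LinearMap.range F.toLinearMap) ≤ (n : Cardinal)) :
    sValue T n ≤ ‖T - F‖ :=
  csInf_le (bddBelow_sValue_set T n) ⟨F, hF, rfl⟩

theorem le_sValue {T : E →L[ℂ] E} {n : ℕ} {t : ℝ}
    (h : ∀ F : E →L[ℂ] E, Module.rank ℂ (LinearMap.range F.toLinearMap) ≤ (n : Cardinal) →
      t ≤ ‖T - F‖) : t ≤ sValue T n := by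
  refine le_csInf ⟨‖T - 0‖, 0, ?_, rfl⟩ ?_
  · simp
  · rintro _ ⟨F, hF, rfl⟩
    exact h F hF

theorem sValue_nonneg (T : E →L[ℂ] E) (n : ℕ) : 0 ≤ sValue T n :=
  le_sValue fun _ _ => norm_nonneg _

theorem sValue_zero_eq_norm (T : E →L[ℂ] E) : sValue T 0 = ‖T‖ := by
  refine le_antisymm (by simpa using sValue_le (T := T) (F := 0) (n := 0) (by simp)) ?_
  refine le_sValue fun F hF => ?_
  have hF0 : F = 0 := by
    have h0 : Module.rank ℂ (LinearMap.range F.toLinearMap) = 0 := by simpa using hF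
    rw [Submodule.rank_eq_zero, LinearMap.range_eq_bot] at h0
    ext x
    exact LinearMap.congr_fun h0 x
  simp [hF0]

theorem IsSingularBasis.sValue_card_le {a : HilbertBasis ι ℂ E} {T : E →L[ℂ] E}
    (h : IsSingularBasis a T) {t : ℝ} (ht : 0 ≤ t) (s : Finset ι) {n : ℕ} (hsn : s.card ≤ n)
    (hs : ∀ i ∉ s, ‖T (a i)‖ ≤ t) : sValue T n ≤ t := by
  classical
  let F : E →L[ℂ] E := ∑ i ∈ s, (innerSL ℂ (a i)).smulRight (T (a i))
  have hF : ∀ x, F x = ∑ i ∈ s, ⟪a i, x⟫_ℂ • T (a i) := fun x => by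
    simp [F]
  have hrank : Module.rank ℂ (LinearMap.range F.toLinearMap) ≤ (n : Cardinal) := by
    have hsub : LinearMap.range F.toLinearMap ≤
        Submodule.span ℂ ((s.image fun i => T (a i) : Finset E) : Set E) := by
      rintro _ ⟨x, rfl⟩
      change F x ∈ _
      rw [hF]
      refine Submodule.sum_mem _ fun i hi => Submodule.smul_mem _ _ (Submodule.subset_span ?_)
      exact Finset.mem_coe.2 (Finset.mem_image_of_mem _ hi)
    refine (Submodule.rank_mono hsub).trans ((rank_span_finset_le _).trans ?_)
    exact_mod_cast Finset.card_image_le.trans hsn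
  refine (sValue_le hrank).trans (ContinuousLinearMap.opNorm_le_bound _ ht fun x => ?_)
  have hFa : ∀ i, (T - F) (a i) = if i ∈ s then 0 else T (a i) := fun i => by
    have hFi : F (a i) = ∑ j ∈ s, if j = i then T (a i) else 0 := by
      rw [hF]
      refine Finset.sum_congr rfl fun j _ => ?_
      rw [orthonormal_iff_ite.1 a.orthonormal]
      split_ifs with hji <;> simp [hji]
    rw [sub_apply, hFi, Finset.sum_ite_eq']
    split_ifs <;> simp
  have hTF : IsSingularBasis a (T - F) := fun i j hij => by
    change ⟪(T - F) (a i), (T - F) (a j)⟫_ℂ = 0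
    rw [hFa, hFa]
    split_ifs <;> simp [h hij]
  have hle : ∀ i, ‖(T - F) (a i)‖ ≤ t := fun i => by
    rw [hFa]
    split_ifs with hi
    · simpa using ht
    · exact hs i hi
  have hsq : ‖(T - F) x‖ ^ 2 ≤ (t * ‖x‖) ^ 2 := by
    rw [mul_pow, mul_comm (t ^ 2)]
    refine hasSum_le (fun i => ?_) (hTF.hasSum_norm_sq x)
      ((a.hasSum_norm_inner_sq x).mul_right (t ^ 2))
    gcongr
    exact hle i
  exact le_of_sq_le_sq hsq (by positivity)

theorem IsSingularBasis.lt_sValue {a : HilbertBasis ι ℂ E} {T : E →L[ℂ] E}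
    (h : IsSingularBasis a T) {t : ℝ} (s : Finset ι) {n : ℕ} (hsn : n < s.card)
    (hs : ∀ i ∈ s, t < ‖T (a i)‖) : t < sValue T n := by
  classical
  rcases lt_or_ge t 0 with ht | ht
  · exact ht.trans_le (sValue_nonneg T n)
  have hne : s.Nonempty := Finset.card_pos.1 (by omega)
  obtain ⟨k, hk, hmin⟩ := s.exists_min_image (fun i => ‖T (a i)‖) hne
  refine (hs k hk).trans_le (le_sValue fun F hF => ?_)
  let L : (s → ℂ) →ₗ[ℂ] E := Fintype.linearCombination ℂ (fun i : s => a i)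
  have hL : ∀ c, L c = ∑ i : s, c i • a i := fun c => by
    simp [L, Fintype.linearCombination_apply]
  obtain ⟨c, hc, hc0⟩ : ∃ c : s → ℂ, F (L c) = 0 ∧ c ≠ 0 := by
    by_contra! hcon
    have hinj : Function.Injective (F.toLinearMap.rangeRestrict ∘ₗ L) := by
      rw [← LinearMap.ker_eq_bot, LinearMap.ker_eq_bot']
      intro c hc
      exact hcon c (by simpa using congrArg Subtype.val hc)
    have := LinearMap.rank_le_of_injective _ hinj
    have h2 := this.trans hF
    simp at h2
    omega
  set x := L c with hx
  obtain ⟨d, hd⟩ : ∃ d : ι → ℂ, ∀ i : s, d i = c i :=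
    ⟨fun i => if hi : i ∈ s then c ⟨i, hi⟩ else 0, fun i => by simp⟩
  have hxd : x = ∑ i ∈ s, d i • a i := by
    rw [hx, hL, ← Finset.sum_coe_sort s]
    simp [hd]
  have hxn : ‖x‖ ^ 2 = ∑ i ∈ s, ‖d i‖ ^ 2 := by
    have := a.isSingularBasis_id.norm_map_sum_sq s d
    simpa [a.orthonormal.1, ← hxd] using this
  have hx0 : 0 < ‖x‖ := by
    rw [norm_pos_iff]
    intro h0
    rw [h0] at hxn
    apply hc0
    ext i
    have hz := (Finset.sum_eq_zero_iff_of_nonneg fun j _ => sq_nonneg ‖d j‖).1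
      (by simpa using hxn.symm) i.1 i.2
    simpa [hd] using hz
  have hTx : (‖T (a k)‖ * ‖x‖) ^ 2 ≤ ‖T x‖ ^ 2 := by
    rw [mul_pow, hxn, hxd, h.norm_map_sum_sq, Finset.mul_sum]
    refine Finset.sum_le_sum fun i hi => ?_
    rw [mul_comm]
    gcongr
    exact hmin i hi
  have hTx' : ‖T (a k)‖ * ‖x‖ ≤ ‖T - F‖ * ‖x‖ := by
    calc _ ≤ ‖T x‖ := le_of_sq_le_sq hTx (norm_nonneg _)
      _ = ‖(T - F) x‖ := by simp [hc]
      _ ≤ _ := (T - F).le_opNorm x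
  exact le_of_mul_le_mul_right hTx' hx0

theorem IsSingularBasis.lt_sValue_iff {a : HilbertBasis ι ℂ E} {T : E →L[ℂ] E}
    (h : IsSingularBasis a T) {t : ℝ} (ht : 0 ≤ t) (n : ℕ) :
    t < sValue T n ↔ (n : ℕ∞) < {i | t < ‖T (a i)‖}.encard := by
  constructor
  · intro hlt
    by_contra! hle
    have hfin : {i | t < ‖T (a i)‖}.Finite := Set.finite_of_encard_le_coe hle
    refine hlt.not_ge (h.sValue_card_le ht hfin.toFinset ?_ fun i hi => ?_)
    · rw [hfin.encard_eq_coe_toFinset_card] at hle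
      exact_mod_cast hle
    · simpa using hi
  · intro hlt
    have hle : ((n + 1 : ℕ) : ℕ∞) ≤ {i | t < ‖T (a i)‖}.encard := by
      push_cast
      exact Order.add_one_le_of_lt hlt
    obtain ⟨s, hs, hcard⟩ := Set.exists_subset_encard_eq hle
    have hfin : s.Finite := Set.finite_of_encard_eq_coe hcard
    refine h.lt_sValue hfin.toFinset (n := n) ?_ fun i hi => hs (by simpa using hi)
    rw [hfin.encard_eq_coe_toFinset_card] at hcard
    have : hfin.toFinset.card = n + 1 := by exact_mod_cast hcard
    omega

theorem encard_setOf_coe_lt (N : ℕ∞) : {n : ℕ | (n : ℕ∞) < N}.encard = N := by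
  induction N using ENat.recTopCoe with
  | top => simp
  | coe N =>
    have : {n : ℕ | (n : ℕ∞) < N} = Finset.range N := by ext; simp
    rw [this, Set.encard_coe_eq_coe_finsetCard, Finset.card_range]

open MeasureTheory in
theorem tsum_ofReal_rpow_eq_of_encard_eq {f : ι → ℝ} {g : κ → ℝ} (hf : ∀ i, 0 ≤ f i)
    (hg : ∀ k, 0 ≤ g k) (h : ∀ t, 0 < t → {i | t < f i}.encard = {k | t < g k}.encard)
    {p : ℝ} (hp : 0 < p) :
    ∑' i, ENNReal.ofReal (f i ^ p) = ∑' k, ENNReal.ofReal (g k ^ p) := by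
  let _ : MeasurableSpace ι := ⊤
  let _ : MeasurableSpace κ := ⊤
  rw [← lintegral_count, ← lintegral_count,
    lintegral_rpow_eq_lintegral_meas_lt_mul _ (Eventually.of_forall hf)
      (measurable_from_top).aemeasurable hp,
    lintegral_rpow_eq_lintegral_meas_lt_mul _ (Eventually.of_forall hg)
      (measurable_from_top).aemeasurable hp]
  congr 1
  refine setLIntegral_congr_fun measurableSet_Ioi fun t ht => ?_
  simp only [Measure.count_apply MeasurableSpace.measurableSet_top, h t ht]

/-- The sum of the `p`-th powers of the singular values, in `[0, ∞]`. -/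
noncomputable def schattenSum (p : ℝ) (T : E →L[ℂ] E) : ℝ≥0∞ :=
  ∑' n, ENNReal.ofReal (sValue T n ^ p)

theorem IsSingularBasis.schattenSum_eq {a : HilbertBasis ι ℂ E} {T : E →L[ℂ] E}
    (h : IsSingularBasis a T) {r : ℝ} (hr : 0 < r) :
    schattenSum (2 * r) T = ∑' i, ENNReal.ofReal (‖T (a i)‖ ^ 2) ^ r := by
  have hterm : ∀ i, ENNReal.ofReal (‖T (a i)‖ ^ 2) ^ r = ENNReal.ofReal (‖T (a i)‖ ^ (2 * r)) :=
    fun i => by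
      rw [ENNReal.ofReal_rpow_of_nonneg (by positivity) hr.le, Real.rpow_mul (norm_nonneg _)]
      norm_num
  simp_rw [hterm]
  refine tsum_ofReal_rpow_eq_of_encard_eq (sValue_nonneg T) (fun _ => norm_nonneg _)
    (fun t ht => ?_) (by positivity)
  simp_rw [h.lt_sValue_iff ht.le]
  exact encard_setOf_coe_lt _

end SingularValues

section ColumnOperator

variable {E F : Type} [NormedAddCommGroup E] [InnerProductSpace ℂ E]
  [NormedAddCommGroup F] [InnerProductSpace ℂ F]

/-- The operator `x ↦ (T x, B x)` into the Hilbert space direct sum. -/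
noncomputable def columnOp (T B : E →L[ℂ] F) : E →L[ℂ] WithLp 2 (F × F) :=
  (WithLp.prodContinuousLinearEquiv 2 ℂ F F).symm.toContinuousLinearMap ∘L T.prod B

theorem inner_columnOp (T B : E →L[ℂ] F) (x y : E) :
    ⟪columnOp T B x, columnOp T B y⟫_ℂ = ⟪T x, T y⟫_ℂ + ⟪B x, B y⟫_ℂ := rfl

theorem norm_columnOp_sq (T B : E →L[ℂ] F) (x : E) :
    ‖columnOp T B x‖ ^ 2 = ‖T x‖ ^ 2 + ‖B x‖ ^ 2 :=
  WithLp.prod_norm_sq_eq_of_L2 _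

theorem norm_le_norm_columnOp_left (T B : E →L[ℂ] F) (x : E) : ‖T x‖ ≤ ‖columnOp T B x‖ :=
  le_of_sq_le_sq (by rw [norm_columnOp_sq]; linarith [sq_nonneg ‖B x‖]) (norm_nonneg _)

theorem norm_le_norm_columnOp_right (T B : E →L[ℂ] F) (x : E) : ‖B x‖ ≤ ‖columnOp T B x‖ :=
  le_of_sq_le_sq (by rw [norm_columnOp_sq]; linarith [sq_nonneg ‖T x‖]) (norm_nonneg _)

theorem inner_columnOp_add_sub (T B : E →L[ℂ] F) (x y : E) :
    ⟪columnOp (T + B) (T - B) x, columnOp (T + B) (T - B) y⟫_ℂ =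
      2 * ⟪columnOp T B x, columnOp T B y⟫_ℂ := by
  simp only [inner_columnOp, add_apply, sub_apply, inner_add_left, inner_add_right,
    inner_sub_left, inner_sub_right]
  ring

theorem norm_columnOp_add_sub_sq (T B : E →L[ℂ] F) (x : E) :
    ‖columnOp (T + B) (T - B) x‖ ^ 2 = 2 * ‖columnOp T B x‖ ^ 2 := by
  have h := parallelogram_law_with_norm ℂ (T x) (B x)
  simp only [norm_columnOp_sq, add_apply, sub_apply]
  linarith

theorem ofReal_norm_columnOp_sq (T B : E →L[ℂ] F) (x : E) :
    ENNReal.ofReal (‖columnOp T B x‖ ^ 2) =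
      ENNReal.ofReal (‖T x‖ ^ 2) + ENNReal.ofReal (‖B x‖ ^ 2) := by
  rw [norm_columnOp_sq, ENNReal.ofReal_add (by positivity) (by positivity)]

theorem ofReal_norm_columnOp_add_sub_sq (T B : E →L[ℂ] F) (x : E) :
    ENNReal.ofReal (‖columnOp (T + B) (T - B) x‖ ^ 2) =
      2 * ENNReal.ofReal (‖columnOp T B x‖ ^ 2) := by
  rw [norm_columnOp_add_sub_sq, ENNReal.ofReal_mul (by positivity), ENNReal.ofReal_ofNat]

theorem ofReal_columnOp_ratio_mul (T B : E →L[ℂ] F) (x : E) {r : ℝ} (hr : 0 < r) :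
    ENNReal.ofReal (‖T x‖ ^ 2 / ‖columnOp T B x‖ ^ 2) * ENNReal.ofReal (‖columnOp T B x‖ ^ 2) ^ r +
      ENNReal.ofReal (‖B x‖ ^ 2 / ‖columnOp T B x‖ ^ 2) *
        ENNReal.ofReal (‖columnOp T B x‖ ^ 2) ^ r =
      ENNReal.ofReal (‖columnOp T B x‖ ^ 2) ^ r := by
  rcases eq_or_ne ‖columnOp T B x‖ 0 with h0 | h0
  · simp [h0, hr]
  · rw [← add_mul, ← ENNReal.ofReal_add (by positivity) (by positivity), ← add_div,
      ← norm_columnOp_sq, div_self (by positivity), ENNReal.ofReal_one, one_mul]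

theorem IsSingularBasis.columnOp_add_sub {κ : Type} {c : HilbertBasis κ ℂ E} {T B : E →L[ℂ] F}
    (hc : IsSingularBasis c (columnOp T B)) :
    IsSingularBasis c (columnOp (T + B) (T - B)) := fun i j hij => by
  change ⟪_, _⟫_ℂ = 0
  rw [inner_columnOp_add_sub, hc hij, mul_zero]

theorem exists_isSingularBasis_columnOp [CompleteSpace E] [CompleteSpace F] {T B : E →L[ℂ] F}
    (hT : IsCompactOperator T) (hB : IsCompactOperator B) :
    ∃ (ι : Type) (a : HilbertBasis ι ℂ E), IsSingularBasis a (columnOp T B) :=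
  exists_isSingularBasis (Z := T.adjoint ∘L T + B.adjoint ∘L B)
    ((hT.clm_comp T.adjoint).add (hB.clm_comp B.adjoint)) fun x y => by
      rw [inner_columnOp]
      simp [ContinuousLinearMap.adjoint_inner_left]

theorem IsCompactOperator.exists_isSingularBasis [CompleteSpace E] [CompleteSpace F]
    {T : E →L[ℂ] F} (hT : IsCompactOperator T) :
    ∃ (ι : Type) (a : HilbertBasis ι ℂ E), IsSingularBasis a T :=
  _root_.exists_isSingularBasis (Z := T.adjoint ∘L T) (hT.clm_comp T.adjoint) fun x y => by
    simp [ContinuousLinearMap.adjoint_inner_left]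

end ColumnOperator

section ClarksonMcCarthy

variable {κ : Type} {T B : H →L[ℂ] H} {r : ℝ}

/-- McCarthy superadditivity of `X ↦ tr X ^ r` for `1 ≤ r`. -/
theorem IsSingularBasis.schattenSum_add_le {c : HilbertBasis κ ℂ H} (hr : 1 ≤ r)
    (hT : IsCompactOperator T) (hB : IsCompactOperator B) (hc : IsSingularBasis c (columnOp T B)) :
    schattenSum (2 * r) T + schattenSum (2 * r) B ≤
      ∑' k, ENNReal.ofReal (‖columnOp T B (c k)‖ ^ 2) ^ r := by
  have hr0 : 0 < r := by positivity
  obtain ⟨_, a, ha⟩ := hT.exists_isSingularBasis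
  obtain ⟨_, b, hb⟩ := hB.exists_isSingularBasis
  rw [ha.schattenSum_eq hr0, hb.schattenSum_eq hr0]
  refine (add_le_add (ha.tsum_rpow_le_of_norm_le hr hc (norm_le_norm_columnOp_left T B))
    (hb.tsum_rpow_le_of_norm_le hr hc (norm_le_norm_columnOp_right T B))).trans_eq ?_
  rw [← ENNReal.tsum_add]
  exact tsum_congr fun k => ofReal_columnOp_ratio_mul T B (c k) hr0

/-- Rotfeld subadditivity of `X ↦ tr X ^ r` for `0 < r ≤ 1`. -/
theorem IsSingularBasis.le_schattenSum_add {c : HilbertBasis κ ℂ H} (hr0 : 0 < r) (hr : r ≤ 1)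
    (hT : IsCompactOperator T) (hB : IsCompactOperator B) (hc : IsSingularBasis c (columnOp T B)) :
    ∑' k, ENNReal.ofReal (‖columnOp T B (c k)‖ ^ 2) ^ r ≤
      schattenSum (2 * r) T + schattenSum (2 * r) B := by
  obtain ⟨_, a, ha⟩ := hT.exists_isSingularBasis
  obtain ⟨_, b, hb⟩ := hB.exists_isSingularBasis
  rw [ha.schattenSum_eq hr0, hb.schattenSum_eq hr0]
  refine Eq.trans_le ?_
    (add_le_add (ha.le_tsum_rpow_of_norm_le hr0 hr hc (norm_le_norm_columnOp_left T B))
    (hb.le_tsum_rpow_of_norm_le hr0 hr hc (norm_le_norm_columnOp_right T B)))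
  rw [← ENNReal.tsum_add]
  exact tsum_congr fun k => (ofReal_columnOp_ratio_mul T B (c k) hr0).symm

theorem tsum_rpow_basis_le_schattenSum (hr : 1 ≤ r) (hT : IsCompactOperator T)
    (c : HilbertBasis κ ℂ H) :
    ∑' k, ENNReal.ofReal (‖T (c k)‖ ^ 2) ^ r ≤ schattenSum (2 * r) T := by
  obtain ⟨_, a, ha⟩ := hT.exists_isSingularBasis
  rw [ha.schattenSum_eq (by positivity)]
  exact ha.tsum_rpow_basis_le hr c

theorem schattenSum_le_tsum_rpow_basis (hr0 : 0 < r) (hr : r ≤ 1) (hT : IsCompactOperator T)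
    (c : HilbertBasis κ ℂ H) :
    schattenSum (2 * r) T ≤ ∑' k, ENNReal.ofReal (‖T (c k)‖ ^ 2) ^ r := by
  obtain ⟨_, a, ha⟩ := hT.exists_isSingularBasis
  rw [ha.schattenSum_eq hr0]
  exact ha.le_tsum_rpow_basis hr0 hr c

theorem ENNReal.rpow_tsum_mul_left_rpow (hr : 0 < r) (C : ℝ≥0∞) (f : κ → ℝ≥0∞) :
    (∑' k, (C * f k) ^ r) ^ r⁻¹ = C * (∑' k, f k ^ r) ^ r⁻¹ := by
  simp_rw [ENNReal.mul_rpow_of_nonneg _ _ hr.le]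
  rw [ENNReal.tsum_mul_left, ENNReal.mul_rpow_of_nonneg _ _ (by positivity),
    ENNReal.rpow_rpow_inv hr.ne']

theorem schattenSum_parallelogram_le_of_one_le (hr : 1 ≤ r)
    (hT : IsCompactOperator T) (hB : IsCompactOperator B) :
    schattenSum (2 * r) (T + B) ^ r⁻¹ + schattenSum (2 * r) (T - B) ^ r⁻¹ ≤
      2 * 2 ^ (1 - r⁻¹) * (schattenSum (2 * r) T ^ r⁻¹ + schattenSum (2 * r) B ^ r⁻¹) := by
  have hr0 : 0 < r := by positivity
  obtain ⟨_, c, hc⟩ := exists_isSingularBasis_columnOp hT hB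
  have hsum := hc.columnOp_add_sub.schattenSum_add_le hr (hT.add hB) (hT.sub hB)
  have htwo := ENNReal.rpow_add_le_mul_rpow_add_rpow (schattenSum (2 * r) (T + B) ^ r⁻¹)
    (schattenSum (2 * r) (T - B) ^ r⁻¹) hr
  rw [ENNReal.rpow_inv_rpow hr0.ne', ENNReal.rpow_inv_rpow hr0.ne',
    ← ENNReal.le_rpow_inv_iff hr0, ENNReal.mul_rpow_of_nonneg _ _ (by positivity),
    ← ENNReal.rpow_mul, sub_mul, mul_inv_cancel₀ hr0.ne', one_mul] at htwo
  calc _ ≤ _ := htwo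
    _ ≤ 2 ^ (1 - r⁻¹) *
        (∑' k, ENNReal.ofReal (‖columnOp (T + B) (T - B) (c k)‖ ^ 2) ^ r) ^ r⁻¹ := by gcongr
    _ = 2 * 2 ^ (1 - r⁻¹) * (∑' k, (ENNReal.ofReal (‖T (c k)‖ ^ 2) +
        ENNReal.ofReal (‖B (c k)‖ ^ 2)) ^ r) ^ r⁻¹ := by
      simp_rw [ofReal_norm_columnOp_add_sub_sq, ofReal_norm_columnOp_sq]
      rw [ENNReal.rpow_tsum_mul_left_rpow hr0]
      ring
    _ ≤ _ := by
      gcongr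
      refine (ENNReal.rpow_tsum_add_rpow_le hr _ _).trans ?_
      gcongr <;> exact tsum_rpow_basis_le_schattenSum hr ‹_› c

theorem schattenSum_parallelogram_le_of_le_one (hr0 : 0 < r) (hr : r ≤ 1)
    (hT : IsCompactOperator T) (hB : IsCompactOperator B) :
    schattenSum (2 * r) (T + B) ^ r⁻¹ + schattenSum (2 * r) (T - B) ^ r⁻¹ ≤
      2 * 2 ^ (r⁻¹ - 1) * (schattenSum (2 * r) T ^ r⁻¹ + schattenSum (2 * r) B ^ r⁻¹) := by
  obtain ⟨_, c, hc⟩ := exists_isSingularBasis_columnOp hT hB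
  calc _ ≤ (∑' k, ENNReal.ofReal (‖(T + B) (c k)‖ ^ 2) ^ r) ^ r⁻¹ +
        (∑' k, ENNReal.ofReal (‖(T - B) (c k)‖ ^ 2) ^ r) ^ r⁻¹ := by
        gcongr
        · exact schattenSum_le_tsum_rpow_basis hr0 hr (hT.add hB) c
        · exact schattenSum_le_tsum_rpow_basis hr0 hr (hT.sub hB) c
    _ ≤ _ := ENNReal.le_rpow_tsum_add_rpow hr0 hr _ _
    _ = 2 * (∑' k, ENNReal.ofReal (‖columnOp T B (c k)‖ ^ 2) ^ r) ^ r⁻¹ := by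
      simp_rw [← ofReal_norm_columnOp_sq, ofReal_norm_columnOp_add_sub_sq]
      rw [ENNReal.rpow_tsum_mul_left_rpow hr0]
    _ ≤ 2 * (schattenSum (2 * r) T + schattenSum (2 * r) B) ^ r⁻¹ := by
      gcongr
      exact hc.le_schattenSum_add hr0 hr hT hB
    _ ≤ _ := by
      rw [mul_assoc]
      gcongr
      exact ENNReal.rpow_add_le_mul_rpow_add_rpow _ _ ((one_le_inv₀ hr0).2 hr)

theorem schattenSum_const_smul (hr0 : 0 < r) (hT : IsCompactOperator T) (z : ℂ) :
    schattenSum (2 * r) (z • T) ^ r⁻¹ =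
      ENNReal.ofReal (‖z‖ ^ 2) * schattenSum (2 * r) T ^ r⁻¹ := by
  obtain ⟨_, a, ha⟩ := hT.exists_isSingularBasis
  have haz : IsSingularBasis a (z • T) := fun i j hij => by
    change ⟪z • T (a i), z • T (a j)⟫_ℂ = 0
    rw [inner_smul_left, inner_smul_right, ha hij, mul_zero, mul_zero]
  rw [ha.schattenSum_eq hr0, haz.schattenSum_eq hr0, ← ENNReal.rpow_tsum_mul_left_rpow hr0]
  simp_rw [smul_apply, norm_smul, mul_pow, ENNReal.ofReal_mul (sq_nonneg ‖z‖)]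

end ClarksonMcCarthy

section SchattenNorm

variable {E : Type} [NormedAddCommGroup E] [InnerProductSpace ℂ E] {S : E →L[ℂ] E}
  {T B : H →L[ℂ] H} {p : ℝ}

theorem memSp_iff_schattenSum_ne_top :
    MemSp p S ↔ IsCompactOperator S ∧ schattenSum p S ≠ ⊤ := by
  refine and_congr_right fun _ => ⟨fun h => ?_, fun h => ?_⟩
  · rw [schattenSum, ← ENNReal.ofReal_tsum_of_nonneg
      (fun n => Real.rpow_nonneg (sValue_nonneg S n) p) h]
    exact ENNReal.ofReal_ne_top
  · have := ENNReal.summable_toReal h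
    simpa [ENNReal.toReal_ofReal (Real.rpow_nonneg (sValue_nonneg S _) p)] using this

theorem MemSp.ofReal_schattenNorm_sq (hp : 0 < p) (hS : MemSp p S) :
    ENNReal.ofReal (schattenNorm p S ^ 2) = schattenSum p S ^ (p / 2)⁻¹ := by
  have h0 : 0 ≤ ∑' n, sValue S n ^ p :=
    tsum_nonneg fun n => Real.rpow_nonneg (sValue_nonneg S n) p
  rw [schattenSum, ← ENNReal.ofReal_tsum_of_nonneg
    (fun n => Real.rpow_nonneg (sValue_nonneg S n) p) hS.2,
    ENNReal.ofReal_rpow_of_nonneg h0 (by positivity), schattenNorm, ← Real.rpow_natCast,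
    ← Real.rpow_mul h0]
  congr 2
  field_simp
  norm_num

theorem MemSp.schattenNorm_pos (hS : MemSp p S) (hS0 : S ≠ 0) : 0 < schattenNorm p S := by
  refine Real.rpow_pos_of_pos (hS.2.tsum_pos
    (fun n => Real.rpow_nonneg (sValue_nonneg S n) p) 0 ?_) _
  rw [sValue_zero_eq_norm]
  exact Real.rpow_pos_of_pos (norm_pos_iff.2 hS0) _

theorem schattenSum_parallelogram_le (hp : 0 < p) (hT : IsCompactOperator T)
    (hB : IsCompactOperator B) :
    schattenSum p (T + B) ^ (p / 2)⁻¹ + schattenSum p (T - B) ^ (p / 2)⁻¹ ≤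
      ENNReal.ofReal (2 * max ((2 : ℝ) ^ (2 / p - 1)) ((2 : ℝ) ^ (1 - 2 / p))) *
        (schattenSum p T ^ (p / 2)⁻¹ + schattenSum p B ^ (p / 2)⁻¹) := by
  have hconst : ∀ s : ℝ, (2 : ℝ≥0∞) * 2 ^ s = ENNReal.ofReal (2 * 2 ^ s) := fun s => by
    rw [ENNReal.ofReal_mul zero_le_two, ← ENNReal.ofReal_rpow_of_pos two_pos,
      ENNReal.ofReal_ofNat]
  have hp2 : 2 * (p / 2) = p := by ring
  rcases le_total 1 (p / 2) with hr | hr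
  · have h := schattenSum_parallelogram_le_of_one_le hr hT hB
    rw [hp2, hconst] at h
    refine h.trans ?_
    gcongr
    rw [inv_div]
    exact le_max_right _ _
  · have h := schattenSum_parallelogram_le_of_le_one (by positivity) hr hT hB
    rw [hp2, hconst] at h
    refine h.trans ?_
    gcongr
    rw [inv_div]
    exact le_max_left _ _

theorem MemSp.add_and_sub (hp : 0 < p) (hT : MemSp p T) (hB : MemSp p B) :
    MemSp p (T + B) ∧ MemSp p (T - B) := by
  rw [memSp_iff_schattenSum_ne_top, memSp_iff_schattenSum_ne_top] at *
  have hr : 0 < (p / 2)⁻¹ := by positivity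
  have hfin := ne_top_of_le_ne_top (ENNReal.mul_ne_top ENNReal.ofReal_ne_top
    (ENNReal.add_ne_top.2 ⟨ENNReal.rpow_ne_top_of_nonneg hr.le hT.2,
      ENNReal.rpow_ne_top_of_nonneg hr.le hB.2⟩)) (schattenSum_parallelogram_le hp hT.1 hB.1)
  rw [ENNReal.add_ne_top] at hfin
  refine ⟨⟨hT.1.add hB.1, fun h => hfin.1 ?_⟩, ⟨hT.1.sub hB.1, fun h => hfin.2 ?_⟩⟩ <;>
  rw [h, ENNReal.top_rpow_of_pos hr]

theorem MemSp.schattenNorm_parallelogram_le (hp : 0 < p) (hT : MemSp p T) (hB : MemSp p B) :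
    schattenNorm p (T + B) ^ 2 + schattenNorm p (T - B) ^ 2 ≤
      2 * max ((2 : ℝ) ^ (2 / p - 1)) ((2 : ℝ) ^ (1 - 2 / p)) *
        (schattenNorm p T ^ 2 + schattenNorm p B ^ 2) := by
  have h := schattenSum_parallelogram_le hp hT.1 hB.1
  obtain ⟨hadd, hsub⟩ := hT.add_and_sub hp hB
  rw [← hadd.ofReal_schattenNorm_sq hp, ← hsub.ofReal_schattenNorm_sq hp,
    ← hT.ofReal_schattenNorm_sq hp, ← hB.ofReal_schattenNorm_sq hp,
    ← ENNReal.ofReal_add (by positivity) (by positivity),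
    ← ENNReal.ofReal_add (by positivity) (by positivity),
    ← ENNReal.ofReal_mul (by positivity)] at h
  exact (ENNReal.ofReal_le_ofReal_iff (by positivity)).1 h

theorem MemSp.schattenNorm_two_smul_sq (hp : 0 < p) (hT : MemSp p T) :
    schattenNorm p ((2 : ℂ) • T) ^ 2 = 4 * schattenNorm p T ^ 2 := by
  have h2T : MemSp p ((2 : ℂ) • T) := by
    rw [two_smul]
    exact (hT.add_and_sub hp hT).1
  have h := schattenSum_const_smul (r := p / 2) (by positivity) hT.1 2
  rw [show 2 * (p / 2) = p by ring, ← hT.ofReal_schattenNorm_sq hp,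
    ← h2T.ofReal_schattenNorm_sq hp, ← ENNReal.ofReal_mul (by positivity),
    ENNReal.ofReal_eq_ofReal_iff (by positivity) (by positivity)] at h
  rw [h]
  norm_num

theorem MemSp.le_schattenNorm_parallelogram (hp : 0 < p) (hT : MemSp p T) (hB : MemSp p B) :
    2 * (schattenNorm p T ^ 2 + schattenNorm p B ^ 2) ≤
      max ((2 : ℝ) ^ (2 / p - 1)) ((2 : ℝ) ^ (1 - 2 / p)) *
        (schattenNorm p (T + B) ^ 2 + schattenNorm p (T - B) ^ 2) := by
  obtain ⟨hadd, hsub⟩ := hT.add_and_sub hp hB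
  have h := hadd.schattenNorm_parallelogram_le hp hsub
  rw [show T + B + (T - B) = (2 : ℂ) • T by rw [two_smul]; abel,
    show T + B - (T - B) = (2 : ℂ) • B by rw [two_smul]; abel,
    hT.schattenNorm_two_smul_sq hp, hB.schattenNorm_two_smul_sq hp] at h
  linarith

end SchattenNorm

section DiagonalExample

variable {E : Type} [NormedAddCommGroup E] [InnerProductSpace ℂ E]

/-- The diagonal operator with entries `α, β, 0, 0, …`. -/
noncomputable def twoDiagonal (e : HilbertBasis ℕ ℂ E) (α β : ℂ) : E →L[ℂ] E :=
  α • (innerSL ℂ (e 0)).smulRight (e 0) + β • (innerSL ℂ (e 1)).smulRight (e 1)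

variable (e : HilbertBasis ℕ ℂ E) (α β : ℂ)

theorem twoDiagonal_apply_basis (k : ℕ) :
    twoDiagonal e α β (e k) = (if k = 0 then α else if k = 1 then β else 0) • e k := by
  have hon := orthonormal_iff_ite.1 e.orthonormal
  simp only [twoDiagonal, add_apply, smul_apply, ContinuousLinearMap.smulRight_apply,
    innerSL_apply_apply, hon]
  rcases k with _ | _ | k <;> simp

theorem isCompactOperator_twoDiagonal : IsCompactOperator (twoDiagonal e α β) := by
  have h : ∀ u : E, IsCompactOperator ((innerSL ℂ u).smulRight u) := fun u =>
    (isCompactOperator_of_locallyCompactSpace_dom (innerSL ℂ u)).clm_comp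
      (ContinuousLinearMap.toSpanSingleton ℂ u)
  exact ((h (e 0)).smul α).add ((h (e 1)).smul β)

theorem isSingularBasis_twoDiagonal : IsSingularBasis e (twoDiagonal e α β) := fun i j hij => by
  change ⟪twoDiagonal e α β (e i), twoDiagonal e α β (e j)⟫_ℂ = 0
  rw [twoDiagonal_apply_basis, twoDiagonal_apply_basis, inner_smul_left, inner_smul_right,
    e.orthonormal.2 hij, mul_zero, mul_zero]

theorem schattenSum_twoDiagonal {p : ℝ} (hp : 0 < p) :
    schattenSum p (twoDiagonal e α β) =
      ENNReal.ofReal (‖α‖ ^ 2) ^ (p / 2) + ENNReal.ofReal (‖β‖ ^ 2) ^ (p / 2) := by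
  have h := (isSingularBasis_twoDiagonal e α β).schattenSum_eq (r := p / 2) (by positivity)
  rw [show 2 * (p / 2) = p by ring] at h
  rw [h, tsum_eq_sum (s := Finset.range 2)]
  · simp_rw [twoDiagonal_apply_basis, norm_smul, e.orthonormal.1, mul_one]
    simp [Finset.sum_range_succ]
  · intro k hk
    have hk2 : 2 ≤ k := not_lt.1 fun h => hk (Finset.mem_range.2 h)
    simp [twoDiagonal_apply_basis, show k ≠ 0 by omega, show k ≠ 1 by omega, hp]

theorem memSp_twoDiagonal {p : ℝ} (hp : 0 < p) : MemSp p (twoDiagonal e α β) := by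
  rw [memSp_iff_schattenSum_ne_top, schattenSum_twoDiagonal e α β hp]
  have hr : 0 ≤ p / 2 := by positivity
  exact ⟨isCompactOperator_twoDiagonal e α β, ENNReal.add_ne_top.2
    ⟨ENNReal.rpow_ne_top_of_nonneg hr ENNReal.ofReal_ne_top,
      ENNReal.rpow_ne_top_of_nonneg hr ENNReal.ofReal_ne_top⟩⟩

theorem schattenNorm_twoDiagonal_sq {p : ℝ} (hp : 0 < p) :
    schattenNorm p (twoDiagonal e α β) ^ 2 =
      ((‖α‖ ^ 2) ^ (p / 2) + (‖β‖ ^ 2) ^ (p / 2)) ^ (2 / p) := by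
  have h := (memSp_twoDiagonal e α β hp).ofReal_schattenNorm_sq hp
  rw [schattenSum_twoDiagonal e α β hp,
    ENNReal.ofReal_rpow_of_nonneg (by positivity) (by positivity),
    ENNReal.ofReal_rpow_of_nonneg (by positivity) (by positivity),
    ← ENNReal.ofReal_add (by positivity) (by positivity),
    ENNReal.ofReal_rpow_of_nonneg (by positivity) (by positivity),
    ENNReal.ofReal_eq_ofReal_iff (by positivity) (by positivity), inv_div] at h
  exact h

end DiagonalExample

/-- for `1 < p < ∞`, the von Neumann–Jordan constant of the Schatten class
`S_p(H)` equals `max {2^(2/p − 1), 2^(1 − 2/p)}`.  (Here `H` is an infinite-dimensional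
separable complex Hilbert space, witnessed by the Hilbert basis `e` indexed by `ℕ`.) -/
theorem stmt17 {H : Type} [NormedAddCommGroup H] [InnerProductSpace ℂ H]
    [CompleteSpace H] [TopologicalSpace.SeparableSpace H]
    (e : HilbertBasis ℕ ℂ H)
    (p : ℝ) (hp : 1 < p) :
    cNJSchatten (H := H) p = max ((2 : ℝ) ^ (2 / p - 1)) ((2 : ℝ) ^ (1 - 2 / p)) := by
  have hp0 : 0 < p := by positivity
  refine IsLeast.csInf_eq ⟨⟨by positivity, fun T B hT hB hne => ?_⟩, fun c hc => ?_⟩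
  · have hpos : 0 < 2 * (schattenNorm p T ^ 2 + schattenNorm p B ^ 2) := by
      rcases not_and_or.1 hne with h | h
      · have := hT.schattenNorm_pos h
        positivity
      · have := hB.schattenNorm_pos h
        positivity
    constructor
    · rw [div_le_div_iff₀ (by positivity) hpos, one_mul, mul_comm]
      linarith [hT.le_schattenNorm_parallelogram hp0 hB]
    · rw [div_le_iff₀ hpos]
      linarith [hT.schattenNorm_parallelogram_le hp0 hB]
  · obtain ⟨hc0, hc⟩ := hc
    have hne : twoDiagonal e 1 0 ≠ 0 := fun h => by
      have h1 := twoDiagonal_apply_basis e 1 0 0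
      rw [h] at h1
      exact e.orthonormal.ne_zero 0 (by simpa using h1.symm)
    have hratio := hc _ _ (memSp_twoDiagonal e 1 0 hp0) (memSp_twoDiagonal e 0 1 hp0)
      fun h => hne h.1
    have hadd : twoDiagonal e 1 0 + twoDiagonal e 0 1 = twoDiagonal e 1 1 := by
      simp [twoDiagonal]
    have hsub : twoDiagonal e 1 0 - twoDiagonal e 0 1 = twoDiagonal e 1 (-1) := by
      simp [twoDiagonal, sub_eq_add_neg]
    rw [hadd, hsub] at hratio
    simp only [schattenNorm_twoDiagonal_sq e _ _ hp0] at hratio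
    have hz : (0 : ℝ) ^ (p / 2) = 0 := Real.zero_rpow (by positivity)
    have hval : ((2 : ℝ) ^ (2 / p) + 2 ^ (2 / p)) / 4 = 2 ^ (2 / p - 1) := by
      rw [Real.rpow_sub two_pos, Real.rpow_one]
      ring
    norm_num [hz] at hratio
    rw [hval] at hratio
    refine max_le hratio.2 ?_
    rw [← neg_sub, Real.rpow_neg zero_le_two]
    exact inv_le_of_inv_le₀ hc0 hratio.1
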